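/- Let S be a Boolean inverse semigroup and let e, f be nonzero idempotents of S. Then f ≼ e if and only if f belongs to every additive ideal of S that contains e. -/

import Mathlib

namespace Paper

/-- An inverse semigroup with zero: an associative multiplication, a zero that is
absorbing, and a map `⁻¹` sending each element to its unique generalized inverse. -/
class IsInverseSemigroup (S : Type*) [Mul S] [Zero S] [Inv S] : Prop where
  mul_assoc : ∀ a b c : S, a * b * c = a * (b * c)
  mul_inv_mul : ∀ a : S, a * a⁻¹ * a = a
  inv_mul_inv : ∀ a : S, a⁻¹ * a * a⁻¹ = a⁻¹
  inv_unique : ∀ a b : S, a * b * a = a → b * a * b = b → b = a⁻¹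
  zero_mul : ∀ a : S, 0 * a = 0
  mul_zero : ∀ a : S, a * 0 = 0

variable {S : Type*} [Mul S] [Zero S] [Inv S]

/-- The natural partial order: `a ≤ b` iff `a = b * a⁻¹ * a`. -/
def nle (a b : S) : Prop := a = b * a⁻¹ * a

/-- `e` is an idempotent. -/
def idem (e : S) : Prop := e * e = e

/-- `a` and `b` are compatible. -/
def compat (a b : S) : Prop := idem (a⁻¹ * b) ∧ idem (a * b⁻¹)

/-- `a` and `b` are orthogonal. -/
def orth (a b : S) : Prop := a⁻¹ * b = 0 ∧ a * b⁻¹ = 0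

/-- `j` is the least upper bound of `a` and `b` for the natural partial order. -/
def isJoin (a b j : S) : Prop :=
  nle a j ∧ nle b j ∧ ∀ c : S, nle a c → nle b c → nle j c

/-- `m` is the greatest lower bound of `a` and `b` for the natural partial order. -/
def isMeet (a b m : S) : Prop :=
  nle m a ∧ nle m b ∧ ∀ c : S, nle c a → nle c b → nle c m

/-- `a` is an atom: a nonzero element with nothing strictly between it and `0`. -/
def isAtomElem (a : S) : Prop := a ≠ 0 ∧ ∀ x : S, nle x a → x = a ∨ x = 0

/-- `s` is the least upper bound of the finite family `f`. -/
def isJoinFin {m : ℕ} (f : Fin m → S) (s : S) : Prop :=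
  (∀ i, nle (f i) s) ∧ ∀ c : S, (∀ i, nle (f i) c) → nle s c

/-- A Boolean inverse semigroup: a nonzero inverse semigroup with zero in which
compatible pairs have joins, multiplication distributes over binary compatible joins,
and the idempotents form a generalized Boolean algebra under the natural partial
order (meets of idempotents are automatically given by multiplication; the extra
requirement is the existence of relative complements). -/
class IsBooleanInverseSemigroup (S : Type*) [Mul S] [Zero S] [Inv S]
    extends IsInverseSemigroup S : Prop where
  exists_ne_zero : ∃ a : S, a ≠ 0
  compat_join : ∀ a b : S, compat a b → ∃ j, isJoin a b j
  mul_join : ∀ a b j c : S, isJoin a b j → isJoin (c * a) (c * b) (c * j)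
  join_mul : ∀ a b j c : S, isJoin a b j → isJoin (a * c) (b * c) (j * c)
  relcomp : ∀ e f : S, idem e → idem f → nle f e →
    ∃ g : S, idem g ∧ nle g e ∧ g * f = 0 ∧ isJoin f g e


/-- An additive ideal: a nonempty two-sided semigroup ideal closed under binary
compatible joins. -/
def isAdditiveIdeal {S : Type*} [Mul S] [Inv S] (I : Set S) : Prop :=
  I.Nonempty ∧ (∀ a ∈ I, ∀ s : S, s * a ∈ I ∧ a * s ∈ I) ∧
    (∀ a ∈ I, ∀ b ∈ I, compat a b → ∀ j : S, isJoin a b j → j ∈ I)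

/-- `f ≼ e`: there is a pencil `x₁, …, xₘ` from `f` to `e`, i.e.
`f = ⋁ᵢ d(xᵢ)` and `r(xᵢ) ≤ e` for all `i`. -/
def pencilLe {S : Type*} [Mul S] [Inv S] (f e : S) : Prop :=
  ∃ (m : ℕ) (x : Fin (m + 1) → S),
    isJoinFin (fun i => (x i)⁻¹ * x i) f ∧ ∀ i, nle (x i * (x i)⁻¹) e

/-- `S` is `0`-simplifying: it is nonzero and its only additive ideals are `{0}`
and `S`. -/
def isZeroSimplifying (S : Type*) [Mul S] [Zero S] [Inv S] : Prop :=
  (∃ a : S, a ≠ 0) ∧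
    ∀ I : Set S, isAdditiveIdeal I → I = {(0 : S)} ∨ I = Set.univ

/-- `S` is fundamental: every element commuting with all idempotents is idempotent. -/
def isFundamental (S : Type*) [Mul S] : Prop :=
  ∀ a : S, (∀ e : S, idem e → a * e = e * a) → idem a

/-- A morphism (additive homomorphism) of Boolean inverse semigroups: a semigroup
homomorphism preserving `0` and binary compatible joins. -/
def isMorphism {S : Type*} {T : Type*} [Mul S] [Zero S] [Inv S]
    [Mul T] [Zero T] [Inv T] (θ : S → T) : Prop :=
  (∀ a b : S, θ (a * b) = θ a * θ b) ∧ θ 0 = 0 ∧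
    ∀ a b j : S, compat a b → isJoin a b j → isJoin (θ a) (θ b) (θ j)

/-!
If `r(x) ≤ e` then `x = ex`, so an additive ideal containing `e` contains `d(x)`, and hence every
finite join of such domains. Conversely the elements `a` with `d(a) ≼ e` form an additive ideal
containing `e`. Closure under joins holds because two pencils can be concatenated, and closure under
products because `≼` is preserved by conjugation: if `x₁, …, xₘ` is a pencil from `f` to `e`, then
`x₁a, …, xₘa` is one from `a⁻¹fa` to `e`, by distributivity.
-/

section InverseSemigroup

variable [IsInverseSemigroup S] {a b c e f j k x : S}

local instance IsInverseSemigroup.toSemigroup : Semigroup S where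
  mul_assoc := IsInverseSemigroup.mul_assoc

open IsInverseSemigroup (mul_inv_mul inv_mul_inv inv_unique)

theorem mul_inv_mul_cancel (a : S) : a * (a⁻¹ * a) = a := by
  rw [← mul_assoc, mul_inv_mul]

theorem mul_inv_mul_cancel_left (a b : S) : a * (a⁻¹ * (a * b)) = a * b := by
  rw [← mul_assoc, ← mul_assoc, mul_inv_mul]

theorem inv_mul_inv_cancel (a : S) : a⁻¹ * (a * a⁻¹) = a⁻¹ := by
  rw [← mul_assoc, inv_mul_inv]

theorem inv_mul_inv_cancel_left (a b : S) : a⁻¹ * (a * (a⁻¹ * b)) = a⁻¹ * b := by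
  rw [← mul_assoc, ← mul_assoc, inv_mul_inv]

theorem inv_inv (a : S) : a⁻¹⁻¹ = a :=
  (inv_unique a⁻¹ a (inv_mul_inv a) (mul_inv_mul a)).symm

theorem idem_inv_mul_self (a : S) : idem (a⁻¹ * a) := by
  rw [idem, mul_assoc, mul_inv_mul_cancel]

theorem idem_mul_inv_self (a : S) : idem (a * a⁻¹) := by
  rw [idem, mul_assoc, inv_mul_inv_cancel]

namespace idem

theorem mul_self_mul (he : idem e) (a : S) : e * (e * a) = e * a :=
  IsIdempotentElem.mul_self_mul he a

theorem inv_eq (he : idem e) : e⁻¹ = e :=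
  (inv_unique e e (by rw [he, he]) (by rw [he, he])).symm

theorem mul_inv_eq (he : idem e) (hf : idem f) : (e * f)⁻¹ = f * (e * f)⁻¹ * e := by
  refine (inv_unique (e * f) _ ?_ ?_).symm
  · simpa only [mul_assoc, he.mul_self_mul, hf.mul_self_mul] using mul_inv_mul_cancel (e * f)
  · have absorb := inv_mul_inv_cancel_left (e * f) e
    simp only [mul_assoc] at absorb
    simp only [mul_assoc, he.mul_self_mul, hf.mul_self_mul, absorb]

protected theorem mul (he : idem e) (hf : idem f) : idem (e * f) := by
  have idem_inv : idem (e * f)⁻¹ := by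
    have absorb := inv_mul_inv_cancel_left (e * f) e
    simp only [mul_assoc] at absorb
    rw [idem, mul_inv_eq he hf]
    simp only [mul_assoc, absorb]
  rwa [← inv_inv (e * f), idem_inv.inv_eq]

theorem mul_comm (he : idem e) (hf : idem f) : e * f = f * e := by
  have inv_eq_swap : f * e = (e * f)⁻¹ := by
    refine inv_unique (e * f) (f * e) ?_ ?_
    · simpa only [idem, mul_assoc, he.mul_self_mul, hf.mul_self_mul] using he.mul hf
    · simpa only [idem, mul_assoc, he.mul_self_mul, hf.mul_self_mul] using hf.mul he
  rw [inv_eq_swap, (he.mul hf).inv_eq]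

theorem compat (he : idem e) (hf : idem f) : compat e f := by
  rw [Paper.compat, he.inv_eq, hf.inv_eq]
  exact ⟨he.mul hf, he.mul hf⟩

theorem nle_iff (he : idem e) : nle e a ↔ a * e = e := by
  rw [nle, mul_assoc, he.inv_eq, he, eq_comm]

end idem

theorem mul_inv_rev (a b : S) : (a * b)⁻¹ = b⁻¹ * a⁻¹ := by
  have swap := (idem_mul_inv_self b).mul_comm (idem_inv_mul_self a)
  refine (inv_unique (a * b) _ ?_ ?_).symm
  · calc a * b * (b⁻¹ * a⁻¹) * (a * b)
        = a * ((b * b⁻¹) * (a⁻¹ * a)) * b := by simp only [mul_assoc]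
      _ = a * ((a⁻¹ * a) * (b * b⁻¹)) * b := by rw [swap]
      _ = a * b := by simp only [mul_assoc, mul_inv_mul_cancel, mul_inv_mul_cancel_left]
  · calc b⁻¹ * a⁻¹ * (a * b) * (b⁻¹ * a⁻¹)
        = b⁻¹ * ((a⁻¹ * a) * (b * b⁻¹)) * a⁻¹ := by simp only [mul_assoc]
      _ = b⁻¹ * ((b * b⁻¹) * (a⁻¹ * a)) * a⁻¹ := by rw [swap]
      _ = b⁻¹ * a⁻¹ := by simp only [mul_assoc, inv_mul_inv_cancel, inv_mul_inv_cancel_left]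

theorem inv_mul_self_mul (a b : S) :
    (a * b)⁻¹ * (a * b) = b⁻¹ * (a⁻¹ * a) * b := by
  simp only [mul_inv_rev, mul_assoc]

theorem nle_refl (a : S) : nle a a :=
  (mul_inv_mul a).symm

namespace nle

theorem mul_eq (h : nle a b) : b * (a⁻¹ * a) = a := by
  rw [← mul_assoc]
  exact h.symm

theorem mul_inv_mul_eq (h : nle a b) : a * (b⁻¹ * b) = a :=
  calc a * (b⁻¹ * b) = b * ((a⁻¹ * a) * (b⁻¹ * b)) := by
        nth_rw 1 [← h.mul_eq]
        simp only [mul_assoc]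
    _ = b * ((b⁻¹ * b) * (a⁻¹ * a)) := by
        rw [(idem_inv_mul_self a).mul_comm (idem_inv_mul_self b)]
    _ = b * (a⁻¹ * a) := by simp only [mul_assoc, mul_inv_mul_cancel_left]
    _ = a := h.mul_eq

theorem inv_mul_eq (h : nle a b) : b⁻¹ * a = a⁻¹ * a :=
  calc b⁻¹ * a = (b⁻¹ * b) * (a⁻¹ * a) := by
        nth_rw 1 [← h.mul_eq]
        simp only [mul_assoc]
    _ = a⁻¹ * (a * (b⁻¹ * b)) := by
        rw [(idem_inv_mul_self b).mul_comm (idem_inv_mul_self a), mul_assoc]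
    _ = a⁻¹ * a := by rw [h.mul_inv_mul_eq]

theorem trans (hab : nle a b) (hbc : nle b c) : nle a c := by
  rw [nle, mul_assoc]
  calc a = b * (a⁻¹ * a) := hab.mul_eq.symm
    _ = c * (b⁻¹ * (b * (a⁻¹ * a))) := by
        nth_rw 1 [← hbc.mul_eq]
        simp only [mul_assoc]
    _ = c * (a⁻¹ * a) := by rw [hab.mul_eq, hab.inv_mul_eq]

theorem antisymm (hab : nle a b) (hba : nle b a) : a = b :=
  hab.mul_inv_mul_eq.symm.trans hba.mul_eq

protected theorem idem (h : nle a e) (he : idem e) : idem a := by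
  rw [← h.mul_eq]
  exact he.mul (idem_inv_mul_self a)

end nle

theorem idem.nle_inv_mul_self (he : idem e) (h : nle e a) : nle e (a⁻¹ * a) :=
  he.nle_iff.2 <| by rw [(idem_inv_mul_self a).mul_comm he, h.mul_inv_mul_eq]

theorem mul_inv_self_nle_iff : nle (x * x⁻¹) a ↔ a * x = x := by
  rw [(idem_mul_inv_self x).nle_iff]
  constructor <;> intro h
  · rw [← mul_inv_mul x, ← mul_assoc, h]
  · rw [← mul_assoc, h]

theorem inv_mul_self_mul_left_nle (a b : S) : nle ((a * b)⁻¹ * (a * b)) (b⁻¹ * b) := by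
  refine (idem_inv_mul_self (a * b)).nle_iff.2 ?_
  simp only [mul_inv_rev, mul_assoc, inv_mul_inv_cancel_left]

theorem isJoin.idem (h : isJoin e f j) (he : idem e) (hf : idem f) : idem j :=
  (h.2.2 _ (he.nle_inv_mul_self h.1) (hf.nle_inv_mul_self h.2.1)).idem (idem_inv_mul_self j)

section FiniteJoins

variable {m n : ℕ}

theorem isJoinFin.unique {u : Fin m → S} (hj : isJoinFin u j) (hk : isJoinFin u k) : j = k :=
  (hj.2 k hk.1).antisymm (hk.2 j hj.1)

theorem isJoinFin_one (u : Fin 1 → S) : isJoinFin u (u 0) :=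
  ⟨Fin.forall_fin_one.2 (nle_refl _), fun _ hc => hc 0⟩

theorem isJoinFin.of_castAdd_natAdd {u : Fin (m + n) → S}
    (ha : isJoinFin (fun i => u (Fin.castAdd n i)) a)
    (hb : isJoinFin (fun i => u (Fin.natAdd m i)) b) (hj : isJoin a b j) : isJoinFin u j :=
  ⟨(Fin.forall_fin_add _).2 ⟨fun i => (ha.1 i).trans hj.1, fun i => (hb.1 i).trans hj.2.1⟩,
    fun c hc => hj.2.2 c (ha.2 c fun _ => hc _) (hb.2 c fun _ => hc _)⟩

theorem isJoinFin.of_init_last {u : Fin (m + 1) → S} (ha : isJoinFin (Fin.init u) a)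
    (hj : isJoin a (u (Fin.last m)) j) : isJoinFin u j :=
  ha.of_castAdd_natAdd (isJoinFin_one fun i => u (Fin.natAdd m i)) hj

end FiniteJoins

theorem pencilLe_inv_mul_self (hx : nle (x * x⁻¹) e) : pencilLe (x⁻¹ * x) e :=
  ⟨0, fun _ => x, isJoinFin_one _, fun _ => hx⟩

theorem pencilLe.join (ha : pencilLe a e) (hb : pencilLe b e) (hj : isJoin a b j) :
    pencilLe j e := by
  obtain ⟨m, x, hxa, hxe⟩ := ha
  obtain ⟨n, y, hyb, hye⟩ := hb
  refine ⟨m + 1 + n, Fin.append (m := m + 1) (n := n + 1) x y, ?_, ?_⟩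
  · apply isJoinFin.of_castAdd_natAdd (m := m + 1) (n := n + 1) (hj := hj)
    · simpa only [Fin.append_left] using hxa
    · simpa only [Fin.append_right] using hyb
  · refine (Fin.forall_fin_add (m := m + 1) (n := n + 1) _).2 ⟨?_, ?_⟩
    · simpa only [Fin.append_left] using hxe
    · simpa only [Fin.append_right] using hye

theorem isAdditiveIdeal.inv_mul_self_mem {I : Set S} (hI : isAdditiveIdeal I) (he : e ∈ I)
    (hx : nle (x * x⁻¹) e) : x⁻¹ * x ∈ I := by
  have hxI : e * x ∈ I := (hI.2.1 e he x).2
  rw [mul_inv_self_nle_iff.1 hx] at hxI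
  exact (hI.2.1 x hxI x⁻¹).1

/-- The elements `a` with `d(a) ≼ e`; in a distributive inverse semigroup and for `e` idempotent,
this is the additive ideal generated by `e`. -/
def pencilIdeal (e : S) : Set S :=
  {a | pencilLe (a⁻¹ * a) e}

theorem idem.mem_pencilIdeal_iff (hf : idem f) : f ∈ pencilIdeal e ↔ pencilLe f e := by
  change pencilLe (f⁻¹ * f) e ↔ pencilLe f e
  rw [hf.inv_eq, hf]

theorem idem.mem_pencilIdeal_self (he : idem e) : e ∈ pencilIdeal e :=
  pencilLe_inv_mul_self (mul_inv_self_nle_iff.2 he)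

end InverseSemigroup

/-- A distributive inverse semigroup: compatible pairs have joins, and multiplication distributes
over binary joins. It is a Boolean inverse semigroup without the axioms that it is nonzero and that
its idempotents have relative complements. -/
class IsDistributiveInverseSemigroup (S : Type*) [Mul S] [Zero S] [Inv S] : Prop
    extends IsInverseSemigroup S where
  compat_join : ∀ a b : S, compat a b → ∃ j, isJoin a b j
  mul_join : ∀ a b j c : S, isJoin a b j → isJoin (c * a) (c * b) (c * j)
  join_mul : ∀ a b j c : S, isJoin a b j → isJoin (a * c) (b * c) (j * c)

instance IsBooleanInverseSemigroup.toIsDistributiveInverseSemigroup [IsBooleanInverseSemigroup S] :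
    IsDistributiveInverseSemigroup S where
  compat_join := compat_join
  mul_join := mul_join
  join_mul := join_mul

section DistributiveInverseSemigroup

variable [IsDistributiveInverseSemigroup S] {a b e f j s : S} {m : ℕ}

open IsDistributiveInverseSemigroup

theorem isJoin.inv_mul_self (h : isJoin a b j) : isJoin (a⁻¹ * a) (b⁻¹ * b) (j⁻¹ * j) := by
  have hmul := mul_join a b j j⁻¹ h
  rwa [h.1.inv_mul_eq, h.2.1.inv_mul_eq] at hmul

theorem isJoin.conj (h : isJoin a b j) (s : S) :
    isJoin (s⁻¹ * a * s) (s⁻¹ * b * s) (s⁻¹ * j * s) :=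
  join_mul _ _ _ s (mul_join _ _ _ s⁻¹ h)

theorem exists_isJoinFin {u : Fin (m + 1) → S} (hu : ∀ i, idem (u i)) :
    ∃ k, idem k ∧ isJoinFin u k := by
  induction m with
  | zero => exact ⟨u 0, hu 0, isJoinFin_one u⟩
  | succ m ih =>
    obtain ⟨k, hk, hku⟩ := ih (u := Fin.init u) fun i => hu i.castSucc
    obtain ⟨j, hj⟩ := compat_join k (u (Fin.last _)) (hk.compat (hu _))
    exact ⟨j, hj.idem hk (hu _), hku.of_init_last hj⟩

theorem isJoinFin.exists_init_last {u : Fin (m + 2) → S} (hu : ∀ i, idem (u i))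
    (h : isJoinFin u s) : ∃ k, idem k ∧ isJoinFin (Fin.init u) k ∧ isJoin k (u (Fin.last _)) s := by
  obtain ⟨k, hk, hku⟩ := exists_isJoinFin (u := Fin.init u) fun i => hu i.castSucc
  obtain ⟨j, hj⟩ := compat_join k (u (Fin.last _)) (hk.compat (hu _))
  exact ⟨k, hk, hku, h.unique (hku.of_init_last hj) ▸ hj⟩

theorem isJoinFin.map {T : Type*} [Mul T] [Zero T] [Inv T] [IsInverseSemigroup T] {φ : S → T}
    (hφ : ∀ a b j, isJoin a b j → isJoin (φ a) (φ b) (φ j)) {u : Fin (m + 1) → S}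
    (hu : ∀ i, idem (u i)) (hs : isJoinFin u s) : isJoinFin (fun i => φ (u i)) (φ s) := by
  induction m generalizing s with
  | zero =>
    rw [hs.unique (isJoinFin_one u)]
    exact isJoinFin_one _
  | succ m ih =>
    obtain ⟨k, -, hk, hks⟩ := hs.exists_init_last hu
    exact (ih (fun i => hu i.castSucc) hk).of_init_last (hφ _ _ _ hks)

theorem isAdditiveIdeal.isJoinFin_mem {I : Set S} (hI : isAdditiveIdeal I) {u : Fin (m + 1) → S}
    (hu : ∀ i, idem (u i)) (huI : ∀ i, u i ∈ I) (hs : isJoinFin u s) : s ∈ I := by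
  induction m generalizing s with
  | zero => exact hs.unique (isJoinFin_one u) ▸ huI 0
  | succ m ih =>
    obtain ⟨k, hk, hku, hks⟩ := hs.exists_init_last hu
    have hkI : k ∈ I := ih (fun i => hu i.castSucc) (fun i => huI i.castSucc) hku
    exact hI.2.2 k hkI _ (huI _) (hk.compat (hu _)) s hks

theorem pencilLe.mem {I : Set S} (h : pencilLe f e) (hI : isAdditiveIdeal I) (he : e ∈ I) :
    f ∈ I := by
  obtain ⟨m, x, hxf, hxe⟩ := h
  exact hI.isJoinFin_mem (fun i => idem_inv_mul_self (x i))
    (fun i => hI.inv_mul_self_mem he (hxe i)) hxf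

theorem pencilLe.conj (h : pencilLe f e) (a : S) : pencilLe (a⁻¹ * f * a) e := by
  obtain ⟨m, x, hxf, hxe⟩ := h
  refine ⟨m, fun i => x i * a, ?_, fun i => mul_inv_self_nle_iff.2 ?_⟩
  · simp only [inv_mul_self_mul]
    exact hxf.map (fun _ _ _ h => h.conj a) fun i => idem_inv_mul_self (x i)
  · rw [← IsInverseSemigroup.mul_assoc, mul_inv_self_nle_iff.1 (hxe i)]

theorem pencilLe.of_nle (hf : pencilLe f e) (ha : idem a) (haf : nle a f) : pencilLe a e := by
  have conj_eq : a⁻¹ * f * a = a := by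
    rw [IsInverseSemigroup.mul_assoc, ha.nle_iff.1 haf, ha.inv_eq, ha]
  exact conj_eq ▸ hf.conj a

theorem idem.isAdditiveIdeal_pencilIdeal (he : idem e) : isAdditiveIdeal (pencilIdeal e) := by
  refine ⟨⟨e, he.mem_pencilIdeal_self⟩, fun a ha s => ⟨?_, ?_⟩, fun a ha b hb _ j hj => ?_⟩
  · exact pencilLe.of_nle ha (idem_inv_mul_self _) (inv_mul_self_mul_left_nle s a)
  · change pencilLe ((a * s)⁻¹ * (a * s)) e
    rw [inv_mul_self_mul]
    exact pencilLe.conj ha s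
  · exact pencilLe.join ha hb hj.inv_mul_self

theorem pencilLe_iff_mem_additive_ideals_general (he : idem e) (hf : idem f) :
    pencilLe f e ↔ ∀ I : Set S, isAdditiveIdeal I → e ∈ I → f ∈ I :=
  ⟨fun h _ hI heI => h.mem hI heI, fun h => hf.mem_pencilIdeal_iff.1 <|
    h _ he.isAdditiveIdeal_pencilIdeal he.mem_pencilIdeal_self⟩

end DistributiveInverseSemigroup

/-- For nonzero idempotents `e, f` of a Boolean inverse semigroup, `f ≼ e` iff `f`
belongs to every additive ideal containing `e`. -/
theorem pencilLe_iff_mem_additive_ideals {S : Type*} [Mul S] [Zero S] [Inv S]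
    [IsBooleanInverseSemigroup S] (e f : S) (he : idem e) (hf : idem f)
    (he0 : e ≠ 0) (hf0 : f ≠ 0) :
    pencilLe f e ↔ ∀ I : Set S, isAdditiveIdeal I → e ∈ I → f ∈ I :=
  pencilLe_iff_mem_additive_ideals_general he hf

end Paper
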